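/- arXiv:1706.06036 — 2 statements merged into one kernel-verified Lean document; each statement's English description precedes it below -/
import Mathlib

section
/- There is no 4-claw-free distance-regular graph with diameter 3 whose intersection array is {15,8,1;1,8,15}, {125,78,1;1,26,125}, {155,96,1;1,32,155}, {275,168,1;1,56,275}, {575,348,1;1,116,575}, or {715,432,25;1,80,675}. -/
/-!
Let `y` and `z` be non-adjacent neighbours of `x`. In a 4-claw-free graph the neighbours of `x` at
distance 2 from both `y` and `z` are pairwise adjacent, so together with `x` they form a clique.
Among the `b 0` neighbours of `x`, exactly `b 1` are at distance 2 from `y` and `b 1` from `z`, so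
there are at least `2 * b 1 - b 0` such vertices. On the other hand, if `θ < 0` is an eigenvalue,
the Delsarte bound allows no clique on more than `1 + b 0 / -θ` vertices. For each of the six arrays
`θ = -5` is an eigenvalue, and except for `{15,8,1;1,8,15}` the two bounds contradict each other.

The exception needs a sharper count. The vertices adjacent to `x`, `y` and `z` are lost in the count
above, so there are at least `2 * b 1 - b 0 + l` far vertices if there are `l` of them. The other
common neighbours of `y` and `z`, apart from `x`, are at distance 2 from `x`; counting pairs at
distance 3 between them and the far vertices shows that there are at least as many of the latter.

For the Delsarte bound, let `u` be the cosine sequence of `θ`. The matrix `M` with entries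
`u (dist x y)` satisfies `A * M = θ • M`, where `A` is the adjacency matrix, and it is a polynomial
in `A`. Hence `M * M` is a multiple of `M`, and since `M` is symmetric of positive trace it is
positive semidefinite. The bound is the nonnegativity of its quadratic form at the indicator vector
of the clique.
-/

open SimpleGraph Finset

/-- `G` is a distance-regular graph with diameter `D` and intersection numbers
`b i` (number of neighbours of `y` at distance `i+1` from `x` when `dist x y = i`) and
`c i` (number of neighbours of `y` at distance `i-1` from `x` when `dist x y = i`). -/
def IsDRG {V : Type*} [Fintype V] (G : SimpleGraph V) (D : ℕ) (b c : ℕ → ℕ) : Prop :=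
  G.Connected ∧
  (∃ x y : V, G.dist x y = D) ∧
  (∀ x y : V, G.dist x y ≤ D) ∧
  c 0 = 0 ∧ c 1 = 1 ∧ b D = 0 ∧
  (∀ i ≤ D, ∀ x y : V, G.dist x y = i →
    {z : V | G.Adj y z ∧ G.dist x z = i - 1}.ncard = c i ∧
    {z : V | G.Adj y z ∧ G.dist x z = i + 1}.ncard = b i)

/-- `G` contains a `t`-claw: a vertex together with `t` pairwise nonadjacent neighbours
(an induced `K_{1,t}`). -/
def HasClaw {V : Type*} (G : SimpleGraph V) (t : ℕ) : Prop :=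
  ∃ (x : V) (s : Finset V), s.card = t ∧ (∀ y ∈ s, G.Adj x y) ∧
    (s : Set V).Pairwise fun y z => ¬ G.Adj y z

/-- `θ` is an eigenvalue of the (real) adjacency matrix of `G`. -/
def IsAdjEigenvalue {V : Type*} [Fintype V] (G : SimpleGraph V) [DecidableRel G.Adj]
    (θ : ℝ) : Prop :=
  ∃ v : V → ℝ, v ≠ 0 ∧ (G.adjMatrix ℝ).mulVec v = θ • v

/-- `G` contains an induced quadrangle: vertices `x, z₁, y, z₂` with
`dist x y = dist z₁ z₂ = 2` inducing a 4-cycle. -/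
def HasQuadrangle {V : Type*} (G : SimpleGraph V) : Prop :=
  ∃ x z₁ y z₂ : V, G.dist x y = 2 ∧ G.dist z₁ z₂ = 2 ∧
    G.Adj x z₁ ∧ G.Adj z₁ y ∧ G.Adj y z₂ ∧ G.Adj z₂ x

/-- The diameter-3 intersection array `{β₀,β₁,β₂; γ₁,γ₂,γ₃}`. -/
def arr3 (b c : ℕ → ℕ) (β₀ β₁ β₂ γ₁ γ₂ γ₃ : ℕ) : Prop :=
  b 0 = β₀ ∧ b 1 = β₁ ∧ b 2 = β₂ ∧ c 1 = γ₁ ∧ c 2 = γ₂ ∧ c 3 = γ₃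

section Matrix

lemma exists_mul_eq_smul_of_mem_adjoin {R A : Type*} [CommSemiring R] [Semiring A] [Algebra R A]
    {a m p : A} {θ : R} (ham : a * m = θ • m) (hp : p ∈ Algebra.adjoin R {a}) :
    ∃ κ : R, p * m = κ • m := by
  induction hp using Algebra.adjoin_induction with
  | mem x hx => exact ⟨θ, by rwa [Set.mem_singleton_iff.1 hx]⟩
  | algebraMap r => exact ⟨r, (Algebra.smul_def r m).symm⟩
  | add x y _ _ hx hy =>
    obtain ⟨⟨κ, hκ⟩, μ, hμ⟩ := And.intro hx hy
    exact ⟨κ + μ, by rw [add_mul, hκ, hμ, add_smul]⟩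
  | mul x y _ _ hx hy =>
    obtain ⟨⟨κ, hκ⟩, μ, hμ⟩ := And.intro hx hy
    exact ⟨μ * κ, by rw [mul_assoc, hμ, mul_smul_comm, hκ, smul_smul]⟩

lemma posSemidef_of_mul_self_eq_smul {n : Type*} [Fintype n] {M : Matrix n n ℝ} {κ : ℝ}
    (hM : M.IsHermitian) (hsq : M * M = κ • M) (htr : 0 < M.trace) : M.PosSemidef := by
  have hpsd : (κ • M).PosSemidef := by
    simpa only [hM.eq, hsq] using Matrix.posSemidef_conjTranspose_mul_self M
  have hκ_nonneg : 0 ≤ κ := by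
    have htrace := hpsd.trace_nonneg
    rw [Matrix.trace_smul, smul_eq_mul] at htrace
    exact nonneg_of_mul_nonneg_left htrace htr
  have hκ : κ ≠ 0 := by
    rintro rfl
    have hM_zero : M = 0 := by
      rw [← Matrix.trace_conjTranspose_mul_self_eq_zero_iff, hM.eq, hsq, zero_smul,
        Matrix.trace_zero]
    simp [hM_zero] at htr
  simpa only [inv_smul_smul₀ hκ] using hpsd.smul (inv_nonneg.2 hκ_nonneg)

lemma sum_sum_nonneg_of_posSemidef {n : Type*} {M : Matrix n n ℝ} (hM : M.PosSemidef)
    (s : Finset n) : 0 ≤ ∑ x ∈ s, ∑ y ∈ s, M x y := by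
  have h := (hM.submatrix ((↑) : s → n)).dotProduct_mulVec_nonneg 1
  rw [← sum_coe_sort]
  simp only [← sum_coe_sort s (M _)]
  simpa [dotProduct, Matrix.mulVec] using h

end Matrix

section Distance

variable {V : Type*} {G : SimpleGraph V} {x y : V}

lemma exists_adj_dist_add_one_eq (hconn : G.Connected) (hxy : x ≠ y) :
    ∃ z, G.Adj y z ∧ G.dist x z + 1 = G.dist x y := by
  obtain ⟨p, hp⟩ := hconn.exists_walk_length_eq_dist y x
  cases p with
  | nil => exact absurd rfl hxy
  | @cons _ z _ hyz q =>
    refine ⟨z, hyz, ?_⟩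
    have hq := dist_le q
    have hstep := hyz.diff_dist_adj (u := x)
    rw [Walk.length_cons, SimpleGraph.dist_comm] at hp
    rw [SimpleGraph.dist_comm] at hq
    omega

lemma exists_adj_dist_eq_dist_eq_add_one (hconn : G.Connected) {n : ℕ} (hn : n < G.dist x y) :
    ∃ z w, G.Adj z w ∧ G.dist x z = n ∧ G.dist x w = n + 1 := by
  induction hd : G.dist x y generalizing y with
  | zero => omega
  | succ d ih =>
    obtain ⟨z, hyz, hz⟩ := exists_adj_dist_add_one_eq hconn (x := x) (y := y)
      (by rintro rfl; simp at hd)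
    obtain rfl | hnd := eq_or_ne n d
    · exact ⟨z, y, hyz.symm, by omega, hd⟩
    · exact ih (y := z) (by omega) (by omega)

lemma ne_of_dist_eq_two (h : G.dist x y = 2) : x ≠ y := by
  rintro rfl
  simp at h

lemma not_adj_of_dist_eq_two (h : G.dist x y = 2) : ¬ G.Adj x y := by
  simp [← dist_eq_one_iff_adj, h]

end Distance

namespace IsDRG

variable {V : Type*} [Fintype V] {G : SimpleGraph V} {D : ℕ} {b c : ℕ → ℕ}

lemma connected (hdrg : IsDRG G D b c) : G.Connected := hdrg.1

lemma dist_le_diam (hdrg : IsDRG G D b c) (x y : V) : G.dist x y ≤ D := hdrg.2.2.1 x y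

lemma c_zero (hdrg : IsDRG G D b c) : c 0 = 0 := hdrg.2.2.2.1

lemma b_diam (hdrg : IsDRG G D b c) : b D = 0 := hdrg.2.2.2.2.2.1

lemma ncard_adj_dist (hdrg : IsDRG G D b c) (x y : V) :
    {z | G.Adj y z ∧ G.dist x z = G.dist x y - 1}.ncard = c (G.dist x y) ∧
      {z | G.Adj y z ∧ G.dist x z = G.dist x y + 1}.ncard = b (G.dist x y) :=
  hdrg.2.2.2.2.2.2 _ (hdrg.dist_le_diam x y) x y rfl

lemma exists_adj_dist (hdrg : IsDRG G D b c) {i : ℕ} (hi : i < D) :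
    ∃ x y z, G.Adj y z ∧ G.dist x y = i ∧ G.dist x z = i + 1 := by
  obtain ⟨hconn, ⟨x, y, hxy⟩, -⟩ := hdrg
  exact ⟨x, exists_adj_dist_eq_dist_eq_add_one hconn (hxy ▸ hi)⟩

lemma exists_adj_adj_dist_eq_two (hdrg : IsDRG G D b c) (hD : 2 ≤ D) :
    ∃ x y z, G.Adj x y ∧ G.Adj x z ∧ G.dist y z = 2 := by
  obtain ⟨y, x, z, hxz, hyx, hyz⟩ := hdrg.exists_adj_dist hD
  exact ⟨x, y, z, (dist_eq_one_iff_adj.1 hyx).symm, hxz, hyz⟩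

lemma b_ne_zero (hdrg : IsDRG G D b c) {i : ℕ} (hi : i < D) : b i ≠ 0 := by
  obtain ⟨x, y, z, hyz, hxy, hxz⟩ := hdrg.exists_adj_dist hi
  rw [← hxy, ← (hdrg.ncard_adj_dist x y).2]
  exact Set.ncard_ne_zero_of_mem (a := z) ⟨hyz, hxy ▸ hxz⟩

lemma c_dist_ne_zero (hdrg : IsDRG G D b c) {x y : V} (hxy : x ≠ y) : c (G.dist x y) ≠ 0 := by
  obtain ⟨z, hyz, hz⟩ := exists_adj_dist_add_one_eq hdrg.connected hxy
  rw [← (hdrg.ncard_adj_dist x y).1]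
  exact Set.ncard_ne_zero_of_mem (a := z) ⟨hyz, by omega⟩

variable [DecidableRel G.Adj]

lemma card_neighborFinset_filter_dist_sub_one (hdrg : IsDRG G D b c) (x y : V) :
    #{z ∈ G.neighborFinset y | G.dist x z = G.dist x y - 1} = c (G.dist x y) := by
  rw [← (hdrg.ncard_adj_dist x y).1, ← Set.ncard_coe_finset]
  simp

lemma card_neighborFinset_filter_dist_add_one (hdrg : IsDRG G D b c) (x y : V) :
    #{z ∈ G.neighborFinset y | G.dist x z = G.dist x y + 1} = b (G.dist x y) := by
  rw [← (hdrg.ncard_adj_dist x y).2, ← Set.ncard_coe_finset]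
  simp

lemma card_neighborFinset (hdrg : IsDRG G D b c) (x : V) : #(G.neighborFinset x) = b 0 := by
  have h := hdrg.card_neighborFinset_filter_dist_add_one x x
  rw [dist_self] at h
  rw [← h, filter_true_of_mem]
  simp [dist_eq_one_iff_adj]

end IsDRG

/-! ### The Delsarte clique bound -/

/-- The intersection matrix with parameters `b`, `c` and `a i = b 0 - b i - c i`, as an operator on
sequences. If `h` is evaluated at the distances to a fixed vertex `x`, its sum over the
neighbours of `y` is `intersectionOp b c h (dist x y)`. The truncated `0 - 1` in the row `i = 0` is
harmless because `c 0 = 0`. -/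
def intersectionOp (b c : ℕ → ℕ) (h : ℕ → ℝ) (i : ℕ) : ℝ :=
  c i * h (i - 1) + (b 0 - b i - c i) * h i + b i * h (i + 1)

/-- `u` is the cosine sequence of the eigenvalue `θ` for diameter `D`: the eigenvector with
`u 0 = 1` of the intersection matrix. -/
def IsCosineSeq (D : ℕ) (b c : ℕ → ℕ) (θ : ℝ) (u : ℕ → ℝ) : Prop :=
  u 0 = 1 ∧ ∀ i ≤ D, intersectionOp b c u i = θ * u i

/-- The solution of the first `D` rows of the eigenvector equation for `θ` by forward substitution;
it is the cosine sequence of `θ` if the row `D` is satisfied as well. -/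
noncomputable def cosineSeq (b c : ℕ → ℕ) (θ : ℝ) : ℕ → ℝ
  | 0 => 1
  | 1 => θ / b 0
  | i + 2 => ((θ - (b 0 - b (i + 1) - c (i + 1))) * cosineSeq b c θ (i + 1)
      - c (i + 1) * cosineSeq b c θ i) / b (i + 1)

/-- The matrix with entries `h (dist x y)`, linear in `h`; for `h = Pi.single i 1` it is the
`i`-th distance matrix. -/
noncomputable def distMatrix {V : Type*} (G : SimpleGraph V) : (ℕ → ℝ) →ₗ[ℝ] Matrix V V ℝ where
  toFun h := Matrix.of fun x y => h (G.dist x y)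
  map_add' _ _ := rfl
  map_smul' _ _ := rfl

section Entries

variable {V : Type*} (G : SimpleGraph V)

@[simp]
lemma distMatrix_apply (h : ℕ → ℝ) (x y : V) : distMatrix G h x y = h (G.dist x y) := rfl

lemma isHermitian_distMatrix (h : ℕ → ℝ) : (distMatrix G h).IsHermitian := by
  ext x y
  simp [SimpleGraph.dist_comm]

lemma distMatrix_single_one [DecidableRel G.Adj] :
    distMatrix G (Pi.single 1 1) = G.adjMatrix ℝ := by
  ext x y
  simp [Pi.single_apply, dist_eq_one_iff_adj, adjMatrix_apply]

lemma intersectionOp_single_succ (b c : ℕ → ℕ) (i : ℕ) :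
    intersectionOp b c (Pi.single (i + 1) 1) = (b i : ℝ) • Pi.single i 1 +
      (b 0 - b (i + 1) - c (i + 1) : ℝ) • Pi.single (i + 1) 1 +
      (c (i + 2) : ℝ) • Pi.single (i + 2) 1 := by
  ext j
  have hcases : (j ≠ i ∧ j ≠ i + 1 ∧ j ≠ i + 2) ∨ j = i ∨ j = i + 1 ∨ j = i + 2 := by omega
  rcases hcases with hj | rfl | rfl | rfl
  · have hj' : j - 1 ≠ i + 1 := by omega
    simp [intersectionOp, hj, hj']
  · have hj : j - 1 ≠ j + 1 := by omega
    simp [intersectionOp, hj]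
  · simp [intersectionOp]
  · simp [intersectionOp]

end Entries

namespace IsDRG

variable {V : Type*} [Fintype V] {G : SimpleGraph V} {D : ℕ} {b c : ℕ → ℕ}

lemma isCosineSeq_cosineSeq (hdrg : IsDRG G D b c) {θ : ℝ}
    (hlast : intersectionOp b c (cosineSeq b c θ) D = θ * cosineSeq b c θ D) :
    IsCosineSeq D b c θ (cosineSeq b c θ) := by
  refine ⟨rfl, fun i hi => ?_⟩
  obtain rfl | hlt := hi.eq_or_lt
  · exact hlast
  · have hb : (b i : ℝ) ≠ 0 := Nat.cast_ne_zero.2 (hdrg.b_ne_zero hlt)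
    cases i with
    | zero =>
      simp only [intersectionOp, cosineSeq, hdrg.c_zero]
      field_simp
      simp
    | succ i =>
      simp only [intersectionOp, cosineSeq, Nat.add_sub_cancel]
      field_simp
      ring

lemma distMatrix_single_zero [DecidableEq V] (hdrg : IsDRG G D b c) :
    distMatrix G (Pi.single 0 1) = 1 := by
  ext x y
  simp [Pi.single_apply, hdrg.connected.dist_eq_zero_iff, Matrix.one_apply]

lemma distMatrix_eq_sum (hdrg : IsDRG G D b c) (h : ℕ → ℝ) :
    distMatrix G h = ∑ i ∈ range (D + 1), h i • distMatrix G (Pi.single i 1) := by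
  ext x y
  have hxy : G.dist x y < D + 1 := Nat.lt_succ_of_le (hdrg.dist_le_diam x y)
  simp [Matrix.sum_apply, Pi.single_apply, hxy]

lemma distMatrix_single_eq_zero (hdrg : IsDRG G D b c) {i : ℕ} (hi : i ≠ 0) (hc : c i = 0) :
    distMatrix G (Pi.single i 1) = 0 := by
  ext x y
  have hxy : G.dist x y ≠ i := by
    rintro rfl
    exact hdrg.c_dist_ne_zero (fun h => hi (by simp [h])) hc
  simp [hxy]

section AdjMatrix

variable [DecidableRel G.Adj]

lemma sum_neighborFinset (hdrg : IsDRG G D b c) (h : ℕ → ℝ) (x y : V) :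
    ∑ w ∈ G.neighborFinset y, h (G.dist x w) = intersectionOp b c h (G.dist x y) := by
  set i := G.dist x y with hi
  -- For `i = 0` the indices `i - 1` and `i` coincide, and the middle term vanishes.
  have hsplit : ∀ w ∈ G.neighborFinset y, h (G.dist x w) = h i
      + (if G.dist x w = i - 1 then h (i - 1) - h i else 0)
      + (if G.dist x w = i + 1 then h (i + 1) - h i else 0) := by
    intro w hw
    have hstep := ((G.mem_neighborFinset y w).1 hw).diff_dist_adj (u := x)
    have hcases : G.dist x w = i ∨ G.dist x w = i + 1 ∨ G.dist x w = i - 1 := by omega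
    rcases hcases with hw | hw | hw <;> rw [hw] <;> split_ifs <;> grind
  rw [sum_congr rfl hsplit]
  simp only [sum_add_distrib, ← sum_filter, sum_const, nsmul_eq_mul, hi,
    hdrg.card_neighborFinset, hdrg.card_neighborFinset_filter_dist_sub_one,
    hdrg.card_neighborFinset_filter_dist_add_one, intersectionOp]
  ring

lemma adjMatrix_mul_distMatrix (hdrg : IsDRG G D b c) (h : ℕ → ℝ) :
    G.adjMatrix ℝ * distMatrix G h = distMatrix G (intersectionOp b c h) := by
  ext x y
  rw [adjMatrix_mul_apply]
  simp only [distMatrix_apply, SimpleGraph.dist_comm (v := y), hdrg.sum_neighborFinset]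

lemma distMatrix_single_mem_adjoin [DecidableEq V] (hdrg : IsDRG G D b c) (i : ℕ) :
    distMatrix G (Pi.single i 1) ∈ Algebra.adjoin ℝ {G.adjMatrix ℝ} := by
  have hadj : G.adjMatrix ℝ ∈ Algebra.adjoin ℝ {G.adjMatrix ℝ} :=
    Algebra.self_mem_adjoin_singleton ℝ _
  induction i using Nat.twoStepInduction with
  | zero => exact hdrg.distMatrix_single_zero ▸ one_mem _
  | one => exact distMatrix_single_one G ▸ hadj
  | more i hi hi' =>
    by_cases hc : c (i + 2) = 0
    · exact hdrg.distMatrix_single_eq_zero (by simp) hc ▸ zero_mem _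
    have hrec := hdrg.adjMatrix_mul_distMatrix (Pi.single (i + 1) 1)
    rw [intersectionOp_single_succ, map_add, map_add, map_smul, map_smul, map_smul,
      ← sub_eq_iff_eq_add'] at hrec
    rw [← inv_smul_smul₀ (Nat.cast_ne_zero.2 hc : (c (i + 2) : ℝ) ≠ 0) (distMatrix G _), ← hrec]
    exact Subalgebra.smul_mem _ (sub_mem (mul_mem hadj hi')
      (add_mem (Subalgebra.smul_mem _ hi _) (Subalgebra.smul_mem _ hi' _))) _

lemma distMatrix_mem_adjoin [DecidableEq V] (hdrg : IsDRG G D b c) (h : ℕ → ℝ) :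
    distMatrix G h ∈ Algebra.adjoin ℝ {G.adjMatrix ℝ} := by
  rw [hdrg.distMatrix_eq_sum h]
  exact sum_mem fun i _ => Subalgebra.smul_mem _ (hdrg.distMatrix_single_mem_adjoin i) _

end AdjMatrix

lemma posSemidef_distMatrix (hdrg : IsDRG G D b c) {θ : ℝ} {u : ℕ → ℝ}
    (hu : IsCosineSeq D b c θ u) : (distMatrix G u).PosSemidef := by
  classical
  obtain ⟨hu_zero, hu⟩ := hu
  have heig : G.adjMatrix ℝ * distMatrix G u = θ • distMatrix G u := by
    rw [hdrg.adjMatrix_mul_distMatrix]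
    ext x y
    exact hu _ (hdrg.dist_le_diam x y)
  obtain ⟨κ, hκ⟩ := exists_mul_eq_smul_of_mem_adjoin heig (hdrg.distMatrix_mem_adjoin u)
  have htrace : 0 < (distMatrix G u).trace := by
    have := hdrg.connected.nonempty
    simp [Matrix.trace, hu_zero, Fintype.card_pos]
  exact posSemidef_of_mul_self_eq_smul (isHermitian_distMatrix G u) hκ htrace

theorem delsarte_clique_bound (hdrg : IsDRG G D b c) {θ : ℝ} {u : ℕ → ℝ}
    (hu : IsCosineSeq D b c θ u) {s : ℕ} {C : Finset V} (hC : G.IsNClique (s + 1) C) :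
    s * -θ ≤ b 0 := by
  classical
  have hrow : ∀ x ∈ C, ∑ y ∈ C, distMatrix G u x y = 1 + s * u 1 := by
    intro x hx
    have hadj : ∀ y ∈ C.erase x, distMatrix G u x y = u 1 := fun y hy => by
      obtain ⟨hyx, hy⟩ := mem_erase.1 hy
      rw [distMatrix_apply, dist_eq_one_iff_adj.2 (hC.isClique hx hy hyx.symm)]
    rw [← add_sum_erase _ _ hx, sum_congr rfl hadj, sum_const, card_erase_of_mem hx, hC.card_eq]
    simp [hu.1]
  have hform : 0 ≤ (s + 1 : ℝ) * (1 + s * u 1) := by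
    have h := sum_sum_nonneg_of_posSemidef (hdrg.posSemidef_distMatrix hu) C
    rwa [sum_congr rfl hrow, sum_const, hC.card_eq, nsmul_eq_mul, Nat.cast_succ] at h
  have hcos : 0 ≤ 1 + s * u 1 := nonneg_of_mul_nonneg_right hform (by positivity)
  have hfirst : b 0 * u 1 = θ := by
    simpa [intersectionOp, hdrg.c_zero, hu.1] using hu.2 0 D.zero_le
  have hscaled : 0 ≤ (b 0 : ℝ) * (1 + s * u 1) := by positivity
  linear_combination hscaled + s * hfirst

end IsDRG

/-! ### Cliques in 4-claw-free graphs -/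

/-- The neighbours of `x` at distance 2 from both `y` and `z`. For non-adjacent neighbours `y`, `z`
of `x`, these are the vertices completing `x; y, z` to a 3-claw. -/
noncomputable def farNeighbors {V : Type*} [Fintype V] (G : SimpleGraph V) [DecidableRel G.Adj]
    (x y z : V) : Finset V :=
  {w ∈ G.neighborFinset x | G.dist y w = 2 ∧ G.dist z w = 2}

section FarNeighbors

variable {V : Type*} [Fintype V] {G : SimpleGraph V} [DecidableRel G.Adj] {D : ℕ} {b c : ℕ → ℕ}
  {x y z : V}

lemma mem_farNeighbors {w : V} :
    w ∈ farNeighbors G x y z ↔ G.Adj x w ∧ G.dist y w = 2 ∧ G.dist z w = 2 := by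
  simp [farNeighbors]

lemma isClique_farNeighbors (hclaw : ¬ HasClaw G 4) (hxy : G.Adj x y) (hxz : G.Adj x z)
    (hyz : G.dist y z = 2) : G.IsClique (farNeighbors G x y z) := by
  classical
  intro v hv w hw hvw
  obtain ⟨hxv, hyv, hzv⟩ := mem_farNeighbors.1 hv
  obtain ⟨hxw, hyw, hzw⟩ := mem_farNeighbors.1 hw
  by_contra hadj
  refine hclaw ⟨x, {y, z, v, w}, ?_, by simp [hxy, hxz, hxv, hxw], ?_⟩
  · simp [card_insert_of_notMem, hvw, ne_of_dist_eq_two hyz, ne_of_dist_eq_two hyv,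
      ne_of_dist_eq_two hzv, ne_of_dist_eq_two hyw, ne_of_dist_eq_two hzw]
  · simp [Set.pairwise_insert, not_adj_of_dist_eq_two, SimpleGraph.dist_comm, G.adj_comm w v, *]

lemma IsDRG.card_farNeighbors_mul_neg_le (hdrg : IsDRG G D b c) (hclaw : ¬ HasClaw G 4) {θ : ℝ}
    {u : ℕ → ℝ} (hu : IsCosineSeq D b c θ u) (hxy : G.Adj x y) (hxz : G.Adj x z)
    (hyz : G.dist y z = 2) : #(farNeighbors G x y z) * -θ ≤ b 0 := by
  classical
  have hfar : G.IsNClique #(farNeighbors G x y z) (farNeighbors G x y z) :=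
    ⟨isClique_farNeighbors hclaw hxy hxz hyz, rfl⟩
  exact hdrg.delsarte_clique_bound hu (hfar.insert fun w hw => (mem_farNeighbors.1 hw).1)

lemma IsDRG.card_common_add_two_mul_b_le [DecidableEq V] (hdrg : IsDRG G D b c)
    (hxy : G.Adj x y) (hxz : G.Adj x z) :
    #{w ∈ G.neighborFinset y ∩ G.neighborFinset z | G.Adj x w} + 2 * b 1 ≤
      #(farNeighbors G x y z) + b 0 := by
  have hcard : ∀ {v : V}, G.Adj x v → #{w ∈ G.neighborFinset x | G.dist v w = 2} = b 1 := by
    intro v hxv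
    have h := hdrg.card_neighborFinset_filter_dist_add_one v x
    rwa [dist_eq_one_iff_adj.2 hxv.symm] at h
  set S := {w ∈ G.neighborFinset x | G.dist y w = 2}
  set T := {w ∈ G.neighborFinset x | G.dist z w = 2}
  set C := {w ∈ G.neighborFinset y ∩ G.neighborFinset z | G.Adj x w} with hC
  have hdisj : Disjoint C (S ∪ T) := by
    rw [Finset.disjoint_left]
    intro w hw hw'
    simp only [hC, S, T, mem_filter, mem_inter, mem_union, mem_neighborFinset,
      ← dist_eq_one_iff_adj] at hw hw'
    omega
  have hsub : C ∪ (S ∪ T) ⊆ G.neighborFinset x := by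
    intro w hw
    simp only [hC, S, T, mem_filter, mem_union, mem_neighborFinset] at hw ⊢
    tauto
  have hle := card_le_card hsub
  rw [card_union_of_disjoint hdisj, hdrg.card_neighborFinset] at hle
  have hinter : S ∩ T = farNeighbors G x y z := (filter_and ..).symm
  have hunion := card_union_add_card_inter S T
  rw [hinter, hcard hxy, hcard hxz] at hunion
  omega

lemma IsDRG.card_common_dist_two_le_card_farNeighbors [DecidableEq V] (hdrg : IsDRG G D b c)
    (hD : 3 ≤ D) (hxy : G.Adj x y) (hxz : G.Adj x z) :
    #{w ∈ G.neighborFinset y ∩ G.neighborFinset z | G.dist x w = 2} ≤ #(farNeighbors G x y z) := by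
  -- Count the pairs at distance 3: each `w` on the left has `b 2` partners on the right,
  -- and each `v` on the right has at most `b 2` partners on the left.
  refine Nat.le_of_mul_le_mul_right (card_mul_le_card_mul (fun w v => G.dist w v = 3) ?_ ?_)
    (Nat.pos_of_ne_zero (hdrg.b_ne_zero hD))
  · intro w hw
    simp only [mem_filter, mem_inter, mem_neighborFinset] at hw
    obtain ⟨⟨hyw, hzw⟩, hxw⟩ := hw
    have hcount := hdrg.card_neighborFinset_filter_dist_add_one w x
    rw [SimpleGraph.dist_comm, hxw] at hcount
    rw [← hcount]
    refine card_le_card fun v hv => ?_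
    simp only [mem_filter, mem_neighborFinset] at hv
    obtain ⟨hxv, hwv⟩ := hv
    have hdist : ∀ {p : V}, G.Adj x p → G.Adj p w → G.dist p v = 2 := by
      intro p hxp hpw
      have hp := hpw.diff_dist_adj (u := v)
      have hp' := hxp.diff_dist_adj (u := v)
      have hvx := dist_eq_one_iff_adj.2 hxv.symm
      rw [SimpleGraph.dist_comm] at hwv ⊢
      omega
    exact (mem_bipartiteAbove _).2 ⟨mem_farNeighbors.2 ⟨hxv, hdist hxy hyw, hdist hxz hzw⟩, hwv⟩
  · intro v hv
    obtain ⟨-, hyv, -⟩ := mem_farNeighbors.1 hv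
    have hcount := hdrg.card_neighborFinset_filter_dist_add_one v y
    rw [SimpleGraph.dist_comm, hyv] at hcount
    rw [← hcount]
    refine card_le_card fun w hw => ?_
    simp only [mem_bipartiteBelow, mem_filter, mem_inter, mem_neighborFinset] at hw ⊢
    exact ⟨hw.1.1.1, SimpleGraph.dist_comm.trans hw.2⟩

lemma IsDRG.card_common_eq_c_two [DecidableEq V] (hdrg : IsDRG G D b c)
    (hyz : G.dist y z = 2) : #(G.neighborFinset y ∩ G.neighborFinset z) = c 2 := by
  have h := hdrg.card_neighborFinset_filter_dist_sub_one y z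
  rw [hyz] at h
  rw [← h]
  congr 1
  ext w
  simp [dist_eq_one_iff_adj, and_comm]

lemma card_le_one_add_card_adj_add_card_dist_two (hxy : G.Adj x y) {S : Finset V}
    (hS : S ⊆ G.neighborFinset y) :
    #S ≤ 1 + #{w ∈ S | G.Adj x w} + #{w ∈ S | G.dist x w = 2} := by
  classical
  have hsub : S ⊆ {x} ∪ {w ∈ S | G.Adj x w} ∪ {w ∈ S | G.dist x w = 2} := by
    intro w hw
    have hyw : G.Adj y w := (G.mem_neighborFinset y w).1 (hS hw)
    have hstep := hyw.diff_dist_adj (u := x)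
    have hreach : G.Reachable x w := hxy.reachable.trans hyw.reachable
    rw [dist_eq_one_iff_adj.2 hxy] at hstep
    simp only [mem_union, mem_singleton, mem_filter, hw, true_and, ← dist_eq_one_iff_adj,
      eq_comm (a := w), ← hreach.dist_eq_zero_iff]
    omega
  exact (card_le_card hsub).trans ((card_union_le _ _).trans
    (Nat.add_le_add_right ((card_union_le _ _).trans_eq (by rw [card_singleton])) _))

lemma IsDRG.c_two_add_two_mul_b_le (hdrg : IsDRG G D b c) (hD : 3 ≤ D) (hxy : G.Adj x y)
    (hxz : G.Adj x z) (hyz : G.dist y z = 2) :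
    c 2 + 2 * b 1 ≤ 2 * #(farNeighbors G x y z) + b 0 + 1 := by
  classical
  have hcommon := card_le_one_add_card_adj_add_card_dist_two hxy
    (inter_subset_left (s₂ := G.neighborFinset z))
  have hadj := hdrg.card_common_add_two_mul_b_le hxy hxz
  have hdist := hdrg.card_common_dist_two_le_card_farNeighbors hD hxy hxz
  rw [hdrg.card_common_eq_c_two hyz] at hcommon
  omega

end FarNeighbors

namespace IsDRG

variable {V : Type*} [Fintype V] {G : SimpleGraph V} {D : ℕ} {b c : ℕ → ℕ} {θ : ℝ} {u : ℕ → ℝ}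

theorem b_bound_of_not_hasClaw_four (hdrg : IsDRG G D b c) (hD : 2 ≤ D) (hclaw : ¬ HasClaw G 4)
    (hu : IsCosineSeq D b c θ u) (hθ : θ ≤ 0) : (2 * b 1 - b 0) * -θ ≤ b 0 := by
  classical
  obtain ⟨x, y, z, hxy, hxz, hyz⟩ := hdrg.exists_adj_adj_dist_eq_two hD
  have hfar : 2 * b 1 ≤ #(farNeighbors G x y z) + b 0 :=
    le_of_add_le_right (hdrg.card_common_add_two_mul_b_le hxy hxz)
  have hfar' : (2 * b 1 - b 0 : ℝ) ≤ #(farNeighbors G x y z) := by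
    rw [sub_le_iff_le_add]
    exact_mod_cast hfar
  exact (mul_le_mul_of_nonneg_right hfar' (neg_nonneg.2 hθ)).trans
    (hdrg.card_farNeighbors_mul_neg_le hclaw hu hxy hxz hyz)

theorem c_bound_of_not_hasClaw_four (hdrg : IsDRG G D b c) (hD : 3 ≤ D) (hclaw : ¬ HasClaw G 4)
    (hu : IsCosineSeq D b c θ u) (hθ : θ ≤ 0) : (c 2 + 2 * b 1 - b 0 - 1) * -θ ≤ 2 * b 0 := by
  classical
  obtain ⟨x, y, z, hxy, hxz, hyz⟩ := hdrg.exists_adj_adj_dist_eq_two (by omega)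
  have hfar : (c 2 + 2 * b 1 - b 0 - 1 : ℝ) ≤ 2 * #(farNeighbors G x y z) := by
    rw [sub_le_iff_le_add, sub_le_iff_le_add, add_right_comm]
    exact_mod_cast hdrg.c_two_add_two_mul_b_le hD hxy hxz hyz
  have hclique := hdrg.card_farNeighbors_mul_neg_le hclaw hu hxy hxz hyz
  linear_combination mul_le_mul_of_nonneg_right hfar (neg_nonneg.2 hθ) + 2 * hclique

end IsDRG

/-- there is no 4-claw-free DRG of diameter 3 with intersection array
`{15,8,1;1,8,15}`, `{125,78,1;1,26,125}`, `{155,96,1;1,32,155}`, `{275,168,1;1,56,275}`,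
`{575,348,1;1,116,575}` or `{715,432,25;1,80,675}`. -/
theorem statement16 {V : Type*} [Fintype V] (G : SimpleGraph V) (b c : ℕ → ℕ)
    (hdrg : IsDRG G 3 b c) (hclaw : ¬ HasClaw G 4) :
    ¬ (arr3 b c 15 8 1 1 8 15 ∨
       arr3 b c 125 78 1 1 26 125 ∨
       arr3 b c 155 96 1 1 32 155 ∨
       arr3 b c 275 168 1 1 56 275 ∨
       arr3 b c 575 348 1 1 116 575 ∨
       arr3 b c 715 432 25 1 80 675) := by
  intro harr
  have hrow_three : intersectionOp b c (cosineSeq b c (-5)) 3 = -5 * cosineSeq b c (-5) 3 := by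
    rcases harr with h | h | h | h | h | h <;> obtain ⟨h₀, h₁, h₂, h₃, h₄, h₅⟩ := h <;>
      norm_num [intersectionOp, cosineSeq, hdrg.b_diam, *]
  have hu := hdrg.isCosineSeq_cosineSeq hrow_three
  have hb := hdrg.b_bound_of_not_hasClaw_four (by norm_num) hclaw hu (by norm_num)
  have hc := hdrg.c_bound_of_not_hasClaw_four le_rfl hclaw hu (by norm_num)
  rcases harr with ⟨h₀, h₁, -, -, h₄, -⟩ | h
  · norm_num [h₀, h₁, h₄] at hc
  · rcases h with h | h | h | h | h <;> obtain ⟨h₀, h₁, -⟩ := h <;> norm_num [h₀, h₁] at hb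
end

section
/- Every distance-regular graph with diameter 3 and intersection array {13,8,1;1,4,13} contains a 4-claw. -/
/-!
The graph is edge-regular: it has valency 13 and any two adjacent vertices have 4 common neighbours.

It has no 5-clique. Let `n v` be the number of neighbours of `v` in a 5-clique `C`. Double counting
over the 42 vertices gives `∑ n v = 65` and `∑ n v ^ 2 = 145`, hence
`∑ (n v - 1) * (n v - 2) = 34`, where every summand is nonnegative. But the members of `C`
contribute `5 * 6`, and the 10 vertices at distance 3 from some member of `C`, having no neighbour
in `C`, contribute `10 * 2`.

Consequently the graph induced on the neighbourhood of a vertex is 4-regular on 13 vertices without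
4-cliques. Suppose that it has no 4 pairwise nonadjacent vertices either. Then for distinct
nonadjacent `y` and `z`, the vertices other than `y` and `z` adjacent to neither form a clique, so
there are at most 3 of them, and at least `13 - 2 - 3 = 8 = 4 + 4` vertices are adjacent to `y` or
`z`. So `y` and `z` have no common neighbour. Thus a vertex together with its 4 neighbours is a
clique, a contradiction.
-/

open SimpleGraph Finset

/-! ### Edge-regular graphs and cliques -/

section EdgeRegular

variable {V : Type*} [Fintype V] [DecidableEq V] (G : SimpleGraph V) [DecidableRel G.Adj]

/-- `G` is edge-regular: it is regular of degree `k`, and any two adjacent vertices have exactly `a`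
common neighbours. -/
structure IsEdgeRegular (k a : ℕ) : Prop where
  regular : G.IsRegularOfDegree k
  card_inter_of_adj : ∀ ⦃x y⦄, G.Adj x y → #(G.neighborFinset x ∩ G.neighborFinset y) = a

theorem sum_card_neighborFinset_inter (C : Finset V) :
    ∑ v, #(G.neighborFinset v ∩ C) = ∑ x ∈ C, G.degree x := by
  have h := sum_card_bipartiteAbove_eq_sum_card_bipartiteBelow (s := univ) (t := C) G.Adj
  convert h using 3 with v _ x _
  · ext; simp [and_comm]
  · rw [← card_neighborFinset_eq_degree]
    congr 1
    ext; simp [G.adj_comm]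

theorem sum_card_neighborFinset_inter_sq (C : Finset V) :
    ∑ v, #(G.neighborFinset v ∩ C) ^ 2 =
      ∑ x ∈ C, ∑ y ∈ C, #(G.neighborFinset x ∩ G.neighborFinset y) := by
  have h := sum_card_bipartiteAbove_eq_sum_card_bipartiteBelow (s := univ) (t := C ×ˢ C)
    fun v p ↦ G.Adj v p.1 ∧ G.Adj v p.2
  rw [sum_product] at h
  convert h using 3 with v _ x _ y _
  · rw [sq, ← card_product]
    congr 1
    ext; simp only [mem_product, mem_inter, mem_neighborFinset, mem_bipartiteAbove]; tauto
  · congr 1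
    ext; simp [G.adj_comm]

variable {G} {C T : Finset V} {s k a : ℕ}

theorem card_neighborFinset_inter_of_isNClique (hC : G.IsNClique s C) {v : V} (hv : v ∈ C) :
    #(G.neighborFinset v ∩ C) = s - 1 := by
  rw [← hC.card_eq, ← card_erase_of_mem hv]
  congr 1
  ext w
  simp only [mem_inter, mem_neighborFinset, mem_erase]
  exact ⟨fun h ↦ ⟨h.1.ne', h.2⟩, fun h ↦ ⟨hC.isClique hv h.2 h.1.symm, h.2⟩⟩

theorem IsEdgeRegular.sum_card_neighborFinset_inter_sq_of_isNClique (hG : IsEdgeRegular G k a)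
    (hC : G.IsNClique s C) :
    ∑ v, #(G.neighborFinset v ∩ C) ^ 2 = s * (k + (s - 1) * a) := by
  rw [sum_card_neighborFinset_inter_sq, ← hC.card_eq]
  refine sum_const_nat fun x hx ↦ ?_
  rw [← add_sum_erase C _ hx, inter_self, card_neighborFinset_eq_degree, hG.regular x,
    ← card_erase_of_mem hx, sum_const_nat fun y hy ↦ ?_]
  exact hG.card_inter_of_adj (hC.isClique hx (mem_of_mem_erase hy) (ne_of_mem_erase hy).symm)

/-- An integer variant of the Delsarte clique bound: no integer lies strictly between `m` and
`m + 1`, so `(n - m) * (n - (m + 1))` is nonnegative for the number `n` of neighbours of any vertex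
in the clique. -/
theorem IsEdgeRegular.clique_inequality (hG : IsEdgeRegular G k a) (hC : G.IsNClique s C)
    (hCT : Disjoint C T) (hT : ∀ v ∈ T, Disjoint (G.neighborFinset v) C) (m : ℤ) :
    s * (((s - 1 : ℕ) - m) * ((s - 1 : ℕ) - (m + 1))) + #T * (m * (m + 1)) ≤
      s * (k + (s - 1 : ℕ) * a) - (2 * m + 1) * (s * k) + m * (m + 1) * Fintype.card V := by
  let n : V → ℤ := fun v ↦ #(G.neighborFinset v ∩ C)
  have sum_n : ∑ v, n v = s * k := by
    have h := sum_card_neighborFinset_inter G C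
    rw [sum_const_nat fun x _ ↦ hG.regular x, hC.card_eq] at h
    simp only [n]
    exact_mod_cast h
  have sum_n_sq : ∑ v, n v ^ 2 = s * (k + (s - 1 : ℕ) * a) := by
    simp only [n]
    exact_mod_cast hG.sum_card_neighborFinset_inter_sq_of_isNClique hC
  have n_of_mem : ∀ v ∈ C, n v = (s - 1 : ℕ) := fun v hv ↦
    congrArg Nat.cast (card_neighborFinset_inter_of_isNClique hC hv)
  have n_eq_zero : ∀ v ∈ T, n v = 0 := fun v hv ↦ by
    simp [n, disjoint_iff_inter_eq_empty.1 (hT v hv)]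
  calc
    _ = ∑ v ∈ C ∪ T, (n v - m) * (n v - (m + 1)) := by
      rw [sum_union hCT, sum_congr rfl fun v hv ↦ by rw [n_of_mem v hv],
        sum_congr (s₁ := T) rfl fun v hv ↦ by rw [n_eq_zero v hv]]
      simp only [sum_const, hC.card_eq, nsmul_eq_mul]
      ring
    _ ≤ ∑ v, (n v - m) * (n v - (m + 1)) := by
      refine sum_le_sum_of_subset_of_nonneg (subset_univ _) fun v _ _ ↦ ?_
      rcases le_or_gt (n v) m with h | h <;> nlinarith
    _ = ∑ v, (n v ^ 2 - (2 * m + 1) * n v + m * (m + 1)) := sum_congr rfl fun v _ ↦ by ring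
    _ = _ := by
      rw [sum_add_distrib, sum_sub_distrib, ← mul_sum, sum_n, sum_n_sq, sum_const, card_univ,
        nsmul_eq_mul]
      ring

end EdgeRegular

/-! ### Graphs without large independent sets -/

section IndepSetFree

variable {W : Type*} {H : SimpleGraph W} {t n a : ℕ} {s : Finset W} {y z : W}

theorem isClique_nonneighbors_of_indepSetFree (hs : H.IsNIndepSet t s)
    (hind : H.IndepSetFree (t + 2)) :
    H.IsClique {u | u ∉ s ∧ ∀ v ∈ s, ¬H.Adj u v} := by
  classical
  rintro u ⟨hus, hu⟩ v ⟨hvs, hv⟩ huv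
  by_contra hadj
  have compl_adj : ∀ {w}, w ∉ s → (∀ x ∈ s, ¬H.Adj w x) → ∀ x ∈ s, Hᶜ.Adj w x :=
    fun hws hw x hx ↦ (H.compl_adj ..).2 ⟨fun h ↦ hws (h ▸ hx), hw x hx⟩
  rw [← isNClique_compl] at hs
  have hvs' : Hᶜ.IsNClique (t + 1) (insert v s) := hs.insert (compl_adj hvs hv)
  refine H.cliqueFree_compl.2 hind _ (hvs'.insert (a := u) ?_)
  exact (forall_mem_insert ..).2 ⟨(H.compl_adj ..).2 ⟨huv, hadj⟩, compl_adj hus hu⟩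

theorem isClique_insert_neighborSet
    (h : ∀ ⦃y z⦄, y ≠ z → ¬H.Adj y z → Disjoint (H.neighborSet y) (H.neighborSet z)) (x : W) :
    H.IsClique (insert x (H.neighborSet x)) := by
  refine isClique_insert.2 ⟨fun y hy z hz hyz ↦ ?_, fun y hy _ ↦ hy⟩
  by_contra hadj
  exact Set.disjoint_left.1 (h hyz hadj) (Adj.symm hy) (Adj.symm hz)

variable [Fintype W] [DecidableRel H.Adj]

theorem disjoint_neighborSet_of_indepSetFree_four (hreg : H.IsRegularOfDegree a)
    (hind : H.IndepSetFree 4) (hfree : H.CliqueFree n) (hcard : n + 2 * a + 1 ≤ Fintype.card W)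
    (hne : y ≠ z) (hyz : ¬H.Adj y z) :
    Disjoint (H.neighborSet y) (H.neighborSet z) := by
  classical
  let U := H.neighborFinset y ∪ H.neighborFinset z
  let Q := ({y, z} ∪ U)ᶜ
  have hpair : H.IsNIndepSet 2 {y, z} :=
    ⟨by simp [IsIndepSet, Set.pairwise_pair, hyz, H.adj_comm z], card_pair hne⟩
  have hQ : H.IsClique (Q : Set W) := by
    refine (isClique_nonneighbors_of_indepSetFree hpair hind).subset fun u hu ↦ ?_
    simp only [Q, U, coe_compl, Set.mem_compl_iff, mem_coe, mem_union, mem_neighborFinset,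
      not_or] at hu
    simpa [H.adj_comm u] using hu
  have hQ_lt : #Q < n := by
    by_contra! h
    exact hfree.mono h Q ⟨hQ, rfl⟩
  have hU : 2 * a ≤ #U := by
    have h_union := card_union_le {y, z} U
    have h_compl := card_add_card_compl ({y, z} ∪ U)
    rw [card_pair hne] at h_union
    change _ + #Q = _ at h_compl
    omega
  have h_inter : #U + #(H.neighborFinset y ∩ H.neighborFinset z) = a + a := by
    rw [card_union_add_card_inter, card_neighborFinset_eq_degree, card_neighborFinset_eq_degree,
      hreg y, hreg z]
  rw [← Set.disjoint_toFinset, disjoint_iff_inter_eq_empty, ← card_eq_zero]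
  change #(H.neighborFinset y ∩ H.neighborFinset z) = 0
  omega

theorem not_indepSetFree_four (hreg : H.IsRegularOfDegree a) (hfree : H.CliqueFree n)
    (hn : n ≤ a + 1) (hcard : n + 2 * a + 1 ≤ Fintype.card W) : ¬H.IndepSetFree 4 := by
  classical
  intro hind
  obtain ⟨x⟩ : Nonempty W := Fintype.card_pos_iff.1 (by omega)
  have hclique : H.IsClique (insert x (H.neighborSet x)) :=
    isClique_insert_neighborSet
      (fun _ _ ↦ disjoint_neighborSet_of_indepSetFree_four hreg hind hfree hcard) x
  refine hfree.mono hn (insert x (H.neighborFinset x)) ⟨by simpa using hclique, ?_⟩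
  rw [card_insert_of_notMem (by simp), card_neighborFinset_eq_degree, hreg x]

end IndepSetFree

/-! ### Local graphs and claws -/

section LocalGraph

variable {V : Type*} {G : SimpleGraph V} {x : V} {t n k a : ℕ}

/-- The local graph of `G` at `x`: the graph induced by `G` on the neighbours of `x`. Its
independent sets are the claws of `G` centred at `x`. -/
abbrev localGraph (G : SimpleGraph V) (x : V) : SimpleGraph (G.neighborSet x) :=
  G.induce (G.neighborSet x)

theorem localGraph_cliqueFree (hfree : G.CliqueFree (n + 1)) : (localGraph G x).CliqueFree n := by
  rw [cliqueFree_induce_iff]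
  simpa using CliqueFreeOn.of_succ G (G.cliqueFreeOn_univ.2 hfree) (Set.mem_univ x)

theorem hasClaw_of_not_localGraph_indepSetFree (h : ¬(localGraph G x).IndepSetFree t) :
    HasClaw G t := by
  simp only [IndepSetFree, not_forall, not_not] at h
  obtain ⟨s, hs⟩ := h
  refine ⟨x, s.map (.subtype _), by rw [card_map, hs.card_eq], fun y hy ↦ ?_, ?_⟩
  · obtain ⟨w, -, rfl⟩ := mem_map.1 hy
    exact w.2
  · simpa [Set.Pairwise] using hs.isIndepSet

variable [Fintype V] [DecidableEq V] [DecidableRel G.Adj]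

theorem IsEdgeRegular.localGraph_isRegularOfDegree (hG : IsEdgeRegular G k a) (x : V) :
    (localGraph G x).IsRegularOfDegree a := by
  intro y
  rw [← card_neighborFinset_eq_degree, ← card_map (.subtype (· ∈ G.neighborSet x)),
    map_neighborFinset_induce]
  exact hG.card_inter_of_adj (Adj.symm y.2)

theorem IsEdgeRegular.hasClaw_four [Nonempty V] (hG : IsEdgeRegular G k a)
    (hfree : G.CliqueFree (n + 1)) (hn : n ≤ a + 1) (hk : n + 2 * a + 1 ≤ k) : HasClaw G 4 := by
  obtain ⟨x⟩ := ‹Nonempty V›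
  refine hasClaw_of_not_localGraph_indepSetFree (x := x)
    (not_indepSetFree_four (hG.localGraph_isRegularOfDegree x) (localGraph_cliqueFree hfree) hn ?_)
  rwa [card_neighborSet_eq_degree, hG.regular x]

end LocalGraph

/-! ### Distance-regular graphs -/

section DistLayer

variable {V : Type*} [Fintype V] {G : SimpleGraph V} {D : ℕ} {b c : ℕ → ℕ}

/-- The set of vertices of `G` at distance `i` from `x`, written `Γᵢ(x)` in the literature. If `G`
is disconnected, layer `0` also contains the vertices unreachable from `x`. -/
noncomputable def distLayer (G : SimpleGraph V) (x : V) (i : ℕ) : Finset V := {z | G.dist x z = i}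

@[simp]
theorem mem_distLayer {x z : V} {i : ℕ} : z ∈ distLayer G x i ↔ G.dist x z = i := by
  simp [distLayer]

theorem IsDRG.card_distLayer_zero (hG : IsDRG G D b c) (x : V) : #(distLayer G x 0) = 1 := by
  refine card_eq_one.2 ⟨x, ?_⟩
  ext z
  simp [hG.1.dist_eq_zero_iff, eq_comm]

theorem IsDRG.card_eq_sum_card_distLayer (hG : IsDRG G D b c) (x : V) :
    Fintype.card V = ∑ i ∈ range (D + 1), #(distLayer G x i) :=
  card_eq_sum_card_fiberwise fun z _ ↦ by simpa [Nat.lt_succ_iff] using hG.2.2.1 x z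

theorem IsDRG.card_neighborFinset_dist_sub_one [DecidableRel G.Adj] (hG : IsDRG G D b c)
    (x y : V) :
    #{z ∈ G.neighborFinset y | G.dist x z = G.dist x y - 1} = c (G.dist x y) := by
  obtain ⟨-, -, hD, -, -, -, h⟩ := hG
  rw [← (h _ (hD x y) x y rfl).1, Set.ncard_eq_toFinset_card']
  congr 1
  ext; simp

theorem IsDRG.card_neighborFinset_dist_add_one [DecidableRel G.Adj] (hG : IsDRG G D b c)
    (x y : V) :
    #{z ∈ G.neighborFinset y | G.dist x z = G.dist x y + 1} = b (G.dist x y) := by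
  obtain ⟨-, -, hD, -, -, -, h⟩ := hG
  rw [← (h _ (hD x y) x y rfl).2, Set.ncard_eq_toFinset_card']
  congr 1
  ext; simp

theorem IsDRG.isRegularOfDegree [DecidableRel G.Adj] (hG : IsDRG G D b c) :
    G.IsRegularOfDegree (b 0) := by
  intro y
  have h := hG.card_neighborFinset_dist_add_one y y
  rw [dist_self] at h
  rw [← h, ← card_neighborFinset_eq_degree]
  congr 1
  ext; simp

theorem IsDRG.card_neighborFinset_dist_eq [DecidableRel G.Adj] (hG : IsDRG G D b c) {x y : V}
    (hxy : x ≠ y) :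
    c (G.dist x y) + #{z ∈ G.neighborFinset y | G.dist x z = G.dist x y} + b (G.dist x y) =
      b 0 := by
  set i := G.dist x y with hi
  have hi_pos : 0 < i := hG.1.pos_dist_of_ne hxy
  have hmaps : Set.MapsTo (G.dist x) (G.neighborFinset y) ({i - 1, i, i + 1} : Finset ℕ) := by
    intro z hz
    have hyz : G.Adj y z := by simpa using hz
    have := hyz.diff_dist_adj (u := x)
    simp only [coe_insert, coe_singleton, Set.mem_insert_iff, Set.mem_singleton_iff]
    omega
  have hsum := card_eq_sum_card_fiberwise hmaps
  rw [sum_insert (by simp; omega), sum_insert (by simp), sum_singleton,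
    hG.card_neighborFinset_dist_sub_one, hG.card_neighborFinset_dist_add_one, ← hi,
    card_neighborFinset_eq_degree, hG.isRegularOfDegree y] at hsum
  omega

theorem IsDRG.isEdgeRegular [DecidableEq V] [DecidableRel G.Adj] (hG : IsDRG G D b c) :
    IsEdgeRegular G (b 0) (b 0 - b 1 - 1) where
  regular := hG.isRegularOfDegree
  card_inter_of_adj x y hxy := by
    have h := hG.card_neighborFinset_dist_eq hxy.ne
    have hc1 : c 1 = 1 := hG.2.2.2.2.1
    have hinter : ({z ∈ G.neighborFinset y | G.dist x z = 1} : Finset V) =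
        G.neighborFinset x ∩ G.neighborFinset y := by
      ext; simp [and_comm]
    rw [dist_eq_one_iff_adj.2 hxy, hinter] at h
    omega

theorem IsDRG.card_distLayer_mul (hG : IsDRG G D b c) (x : V) (i : ℕ) :
    #(distLayer G x i) * b i = #(distLayer G x (i + 1)) * c (i + 1) := by
  classical
  refine card_mul_eq_card_mul G.Adj (fun y hy ↦ ?_) fun y hy ↦ ?_ <;> rw [mem_distLayer] at hy
  · rw [← hy, ← hG.card_neighborFinset_dist_add_one]
    congr 1
    ext; simp [and_comm]
  · rw [← hy, ← hG.card_neighborFinset_dist_sub_one]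
    congr 1
    ext; simp [hy, G.adj_comm y, and_comm]

theorem IsDRG.dist_eq_sub_one_of_adj (hG : IsDRG G D b c) {x y z : V}
    (hc : c (G.dist x y) = b 0) (hyz : G.Adj y z) : G.dist x z = G.dist x y - 1 := by
  classical
  have hcard := hG.card_neighborFinset_dist_sub_one x y
  rw [hc, ← hG.isRegularOfDegree y, ← card_neighborFinset_eq_degree, card_filter_eq_iff] at hcard
  exact hcard z (by simpa using hyz)

theorem IsDRG.disjoint_distLayer_of_adj (hG : IsDRG G D b c) (hc : c D = b 0) {x y : V}
    (hxy : G.Adj x y) : Disjoint (distLayer G x D) (distLayer G y D) := by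
  refine Finset.disjoint_left.2 fun z hx hy ↦ ?_
  rw [mem_distLayer, dist_comm] at hx hy
  have hD : 1 ≤ D := dist_eq_one_iff_adj.2 hxy ▸ hG.2.2.1 x y
  have := hG.dist_eq_sub_one_of_adj (hx ▸ hc) hxy
  omega

theorem IsDRG.one_lt_dist_of_mem_biUnion_distLayer [DecidableEq V] (hG : IsDRG G D b c)
    (hD : 3 ≤ D) (hc : c D = b 0) {C : Finset V} (hC : G.IsClique (C : Set V)) {v w : V}
    (hv : v ∈ C.biUnion (distLayer G · D)) (hw : w ∈ C) : 1 < G.dist v w := by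
  obtain ⟨x, hx, hxv⟩ := mem_biUnion.1 hv
  rw [mem_distLayer, dist_comm] at hxv
  obtain rfl | hxw := eq_or_ne x w
  · omega
  · rw [hG.dist_eq_sub_one_of_adj (hxv ▸ hc) (hC hx hw hxw)]
    omega

/-- The `s * l` vertices at distance `D` from a member of the clique have no neighbour in it. -/
theorem IsDRG.clique_inequality (hG : IsDRG G D b c) (hD : 3 ≤ D) (hc : c D = b 0) {C : Finset V}
    {s l : ℕ} (hl : ∀ x, #(distLayer G x D) = l) (hC : G.IsNClique s C) (m : ℤ) :
    s * (((s - 1 : ℕ) - m) * ((s - 1 : ℕ) - (m + 1))) + (s * l : ℕ) * (m * (m + 1)) ≤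
      s * (b 0 + (s - 1 : ℕ) * (b 0 - b 1 - 1 : ℕ)) - (2 * m + 1) * (s * b 0) +
        m * (m + 1) * Fintype.card V := by
  classical
  have hdist {v w : V} :=
    hG.one_lt_dist_of_mem_biUnion_distLayer hD hc hC.isClique (v := v) (w := w)
  have hcard : #(C.biUnion (distLayer G · D)) = s * l := by
    rw [card_biUnion fun x hx y hy hxy ↦ hG.disjoint_distLayer_of_adj hc (hC.isClique hx hy hxy),
      sum_const_nat fun x _ ↦ hl x, hC.card_eq]
  rw [← hcard]
  refine hG.isEdgeRegular.clique_inequality hC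
    (Finset.disjoint_left.2 fun v hvC hvT ↦ ?_)
    (fun v hv ↦ Finset.disjoint_left.2 fun w hvw hw ↦ ?_) m
  · simpa using hdist hvT hvC
  · exact (hdist hv hw).ne' (by simpa using hvw)

end DistLayer

/-! ### The intersection array `{13,8,1;1,4,13}` -/

section IntersectionArray

variable {V : Type*} [Fintype V] {G : SimpleGraph V} {b c : ℕ → ℕ}

theorem card_distLayers_of_arr3 (hG : IsDRG G 3 b c) (harr : arr3 b c 13 8 1 1 4 13) (x : V) :
    #(distLayer G x 3) = 2 ∧ Fintype.card V = 42 := by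
  obtain ⟨hb0, hb1, hb2, hc1, hc2, hc3⟩ := harr
  have h0 := hG.card_distLayer_mul x 0
  have h1 := hG.card_distLayer_mul x 1
  have h2 := hG.card_distLayer_mul x 2
  have hV := hG.card_eq_sum_card_distLayer x
  simp only [zero_add, Nat.reduceAdd, hG.card_distLayer_zero, hb0, hb1, hb2, hc1, hc2, hc3,
    sum_range_succ, sum_range_zero] at h0 h1 h2 hV
  omega

theorem cliqueFree_five_of_arr3 (hG : IsDRG G 3 b c) (harr : arr3 b c 13 8 1 1 4 13) :
    G.CliqueFree 5 := by
  intro C hC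
  have hlayer := card_distLayers_of_arr3 hG harr
  obtain ⟨x, -⟩ := hG.2.1
  obtain ⟨hb0, hb1, -, -, -, hc3⟩ := harr
  have h := hG.clique_inequality le_rfl (hc3.trans hb0.symm) (fun x ↦ (hlayer x).1) hC 1
  norm_num [hb0, hb1, (hlayer x).2] at h

end IntersectionArray

/-- every DRG of diameter 3 with intersection array `{13,8,1;1,4,13}`
contains a 4-claw. -/
theorem statement17 {V : Type*} [Fintype V] (G : SimpleGraph V) (b c : ℕ → ℕ)
    (hdrg : IsDRG G 3 b c) (harr : arr3 b c 13 8 1 1 4 13) :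
    HasClaw G 4 := by
  classical
  have hreg : IsEdgeRegular G 13 4 := by simpa [harr.1, harr.2.1] using hdrg.isEdgeRegular
  have hfree : G.CliqueFree 5 := cliqueFree_five_of_arr3 hdrg harr
  have : Nonempty V := hdrg.1.nonempty
  exact hreg.hasClaw_four hfree (by norm_num) (by norm_num)
end
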